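/- Let C be a connected strongly graded k-coalgebra, let X and Y be graded right C-comodules, and let f : X → Y be a morphism of graded right C-comodules (a k-linear map with f(Xₙ) ⊆ Yₙ for all n and (f⊗id_C)∘ρ^X = ρ^Y∘f). If X is strongly graded in degree n and the component fₙ : Xₙ → Yₙ is injective, then f is injective. -/

import Mathlib

/-!
The components of a coaction are natural: if `f` is colinear, then applying `f` and then taking the
component of bidegree `(n, q)` is the same as taking the component in `Xₙ ⊗ C_q` and then applying
`fₙ ⊗ id`. Flatness of `C_q` makes `fₙ ⊗ id` injective, so `f` is injective wherever the component
of bidegree `(n, q)` is, hence on `X_{n+q}` because `X` is strongly graded in degree `n`. Finally,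
a graded map is injective as soon as it is injective in each degree.
-/

open TensorProduct

noncomputable section
namespace Koszul

variable (k : Type) [Field k]
variable (C : Type) [AddCommGroup C] [Module k C] [Coalgebra k C]
variable (𝒞 : ℕ → Submodule k C)

/-- The data exhibiting `C = ⊕ₙ Cₙ` as a connected graded coalgebra: a grouplike element `g`
spanning `C₀`, the counit vanishing in positive degrees, and the components
`Δc p q : C_{p+q} → C_p ⊗ C_q` of the comultiplication (extended by `0` to the other
homogeneous components of `C`). -/
structure GradedCoalgebraData where
  g : C
  Δc : ∀ p q : ℕ, C →ₗ[k] (↥(𝒞 p) ⊗[k] ↥(𝒞 q))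
  hC0 : 𝒞 0 = Submodule.span k {g}
  hgrp : Coalgebra.comul (R := k) g = g ⊗ₜ[k] g
  hcu : Coalgebra.counit (R := k) g = 1
  hcounit : ∀ n, 1 ≤ n → ∀ x ∈ 𝒞 n, Coalgebra.counit (R := k) x = 0
  hΔc : ∀ n, ∀ x ∈ 𝒞 n, Coalgebra.comul (R := k) x =
    ∑ p ∈ Finset.range (n+1),
      (TensorProduct.map (𝒞 p).subtype (𝒞 (n-p)).subtype) (Δc p (n-p) x)
  hΔc0 : ∀ p q n, n ≠ p + q → ∀ x ∈ 𝒞 n, Δc p q x = 0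

/-- `C` is strongly graded: every component `Δ_{p,q} : C_{p+q} → C_p ⊗ C_q` is injective. -/
def GradedCoalgebraData.Strong (D : GradedCoalgebraData k C 𝒞) : Prop :=
  ∀ p q : ℕ, ∀ x ∈ 𝒞 (p + q), D.Δc p q x = 0 → x = 0

/-- The data of a graded right `C`-comodule structure on `X = ⊕ₙ Xₙ`: a counital and
coassociative coaction `ρ` together with its components `ρc p q : X_{p+q} → X_p ⊗ C_q`
(extended by `0` to the other homogeneous components of `X`). -/
structure GradedComoduleData (X : Type) [AddCommGroup X] [Module k X]
    (𝒳 : ℕ → Submodule k X) where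
  ρ : X →ₗ[k] X ⊗[k] C
  ρc : ∀ p q : ℕ, X →ₗ[k] (↥(𝒳 p) ⊗[k] ↥(𝒞 q))
  coassoc : ∀ x, (LinearMap.rTensor C ρ) (ρ x) =
    (TensorProduct.assoc k X C C).symm
      ((LinearMap.lTensor X (Coalgebra.comul (R := k))) (ρ x))
  counit_law : ∀ x,
    (TensorProduct.rid k X) ((LinearMap.lTensor X (Coalgebra.counit (R := k))) (ρ x)) = x
  hρc : ∀ n, ∀ x ∈ 𝒳 n, ρ x =
    ∑ p ∈ Finset.range (n+1),
      (TensorProduct.map (𝒳 p).subtype (𝒞 (n-p)).subtype) (ρc p (n-p) x)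
  hρc0 : ∀ p q n, n ≠ p + q → ∀ x ∈ 𝒳 n, ρc p q x = 0

section HomogeneousProj

variable {R X Y ι : Type*} [Semiring R] [AddCommMonoid X] [Module R X] [AddCommMonoid Y]
  [Module R Y] [DecidableEq ι] (𝒳 : ι → Submodule R X) [DirectSum.Decomposition 𝒳]

/-- The projection of a graded module `X = ⊕ᵢ Xᵢ` onto its homogeneous component of degree `i`. -/
def homogeneousProj (i : ι) : X →ₗ[R] 𝒳 i :=
  DirectSum.component R ι (fun j ↦ 𝒳 j) i ∘ₗ (DirectSum.decomposeLinearEquiv 𝒳).toLinearMap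

theorem homogeneousProj_comp_subtype_self (i : ι) :
    homogeneousProj 𝒳 i ∘ₗ (𝒳 i).subtype = LinearMap.id := by
  ext x
  exact DirectSum.decompose_of_mem_same 𝒳 x.2

theorem homogeneousProj_comp_subtype_of_ne {i j : ι} (hij : i ≠ j) :
    homogeneousProj 𝒳 j ∘ₗ (𝒳 i).subtype = 0 := by
  ext x
  exact DirectSum.decompose_of_mem_ne 𝒳 x.2 hij

variable {𝒳} {𝒴 : ι → Submodule R Y} [DirectSum.Decomposition 𝒴] {f : X →ₗ[R] Y}

theorem homogeneousProj_comp_eq_restrict_comp (hf : ∀ i, ∀ x ∈ 𝒳 i, f x ∈ 𝒴 i) (i : ι) :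
    homogeneousProj 𝒴 i ∘ₗ f = f.restrict (hf i) ∘ₗ homogeneousProj 𝒳 i := by
  refine DirectSum.decompose_lhom_ext 𝒳 fun j ↦ ?_
  have hfj : f ∘ₗ (𝒳 j).subtype = (𝒴 j).subtype ∘ₗ f.restrict (hf j) := rfl
  rw [LinearMap.comp_assoc, LinearMap.comp_assoc, hfj, ← LinearMap.comp_assoc]
  obtain rfl | hji := eq_or_ne j i
  · rw [homogeneousProj_comp_subtype_self, homogeneousProj_comp_subtype_self,
      LinearMap.id_comp, LinearMap.comp_id]
  · rw [homogeneousProj_comp_subtype_of_ne 𝒴 hji, homogeneousProj_comp_subtype_of_ne 𝒳 hji,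
      LinearMap.zero_comp, LinearMap.comp_zero]

theorem injective_of_injOn_homogeneous (hf : ∀ i, ∀ x ∈ 𝒳 i, f x ∈ 𝒴 i)
    (hinj : ∀ i, Set.InjOn f (𝒳 i)) : Function.Injective f := by
  intro x y hxy
  have hproj (i : ι) : homogeneousProj 𝒳 i x = homogeneousProj 𝒳 i y := by
    have hnat (z : X) : (homogeneousProj 𝒴 i (f z) : Y) = f (homogeneousProj 𝒳 i z) :=
      congrArg Subtype.val (LinearMap.congr_fun (homogeneousProj_comp_eq_restrict_comp hf i) z)
    refine Subtype.ext (hinj i (Subtype.property _) (Subtype.property _) ?_)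
    rw [← hnat x, ← hnat y, hxy]
  exact (DirectSum.decompose 𝒳).injective (DFinsupp.ext hproj)

end HomogeneousProj

section CoactionComponent

variable {R C X Y ι κ : Type*} [CommSemiring R] [AddCommMonoid C] [Module R C]
  [AddCommMonoid X] [Module R X] [AddCommMonoid Y] [Module R Y] [DecidableEq ι] [DecidableEq κ]
  (𝒞 : κ → Submodule R C) [DirectSum.Decomposition 𝒞]
  (𝒳 : ι → Submodule R X) [DirectSum.Decomposition 𝒳]

/-- The component `ρ_{p,q} : X → X_p ⊗ C_q` of a linear map `ρ : X → X ⊗ C` between graded modules.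
It is defined on all of `X` and not only on `X_{p+q}`. -/
def coactionComponent (ρ : X →ₗ[R] X ⊗[R] C) (p : ι) (q : κ) : X →ₗ[R] 𝒳 p ⊗[R] 𝒞 q :=
  TensorProduct.map (homogeneousProj 𝒳 p) (homogeneousProj 𝒞 q) ∘ₗ ρ

variable {𝒳} {𝒴 : ι → Submodule R Y} [DirectSum.Decomposition 𝒴]
  {ρX : X →ₗ[R] X ⊗[R] C} {ρY : Y →ₗ[R] Y ⊗[R] C} {f : X →ₗ[R] Y}

theorem coactionComponent_comp_eq_rTensor_comp (hf : ∀ i, ∀ x ∈ 𝒳 i, f x ∈ 𝒴 i)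
    (hcolin : ρY ∘ₗ f = f.rTensor C ∘ₗ ρX) (p : ι) (q : κ) :
    coactionComponent 𝒞 𝒴 ρY p q ∘ₗ f =
      (f.restrict (hf p)).rTensor (𝒞 q) ∘ₗ coactionComponent 𝒞 𝒳 ρX p q := by
  simp only [coactionComponent, LinearMap.comp_assoc, hcolin]
  simp only [← LinearMap.comp_assoc, LinearMap.map_comp_rTensor, LinearMap.rTensor_comp_map,
    homogeneousProj_comp_eq_restrict_comp hf]

theorem injOn_of_injOn_coactionComponent (hf : ∀ i, ∀ x ∈ 𝒳 i, f x ∈ 𝒴 i)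
    (hcolin : ρY ∘ₗ f = f.rTensor C ∘ₗ ρX) {p : ι} (hfp : Set.InjOn f (𝒳 p))
    {q : κ} [Module.Flat R (𝒞 q)] {s : Set X}
    (hs : Set.InjOn (coactionComponent 𝒞 𝒳 ρX p q) s) : Set.InjOn f s := by
  have hfp_inj : Function.Injective (f.restrict (hf p)) :=
    (Set.MapsTo.restrict_inj (hf p)).mpr hfp
  have hfp_tensor : Function.Injective ((f.restrict (hf p)).rTensor (𝒞 q)) :=
    Module.Flat.rTensor_preserves_injective_linearMap _ hfp_inj
  have hcomp : Set.InjOn (coactionComponent 𝒞 𝒴 ρY p q ∘ f) s := by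
    rw [← LinearMap.coe_comp, coactionComponent_comp_eq_rTensor_comp 𝒞 hf hcolin,
      LinearMap.coe_comp]
    exact hfp_tensor.comp_injOn hs
  exact hcomp.of_comp

end CoactionComponent

section GradedComodule

variable {k C 𝒞} {X : Type} [AddCommGroup X] [Module k X] {𝒳 : ℕ → Submodule k X}

theorem GradedComoduleData.coactionComponent_eq [DirectSum.Decomposition 𝒞]
    [DirectSum.Decomposition 𝒳] (D : GradedComoduleData k C 𝒞 X 𝒳) {p q : ℕ} {x : X}
    (hx : x ∈ 𝒳 (p + q)) : coactionComponent 𝒞 𝒳 D.ρ p q x = D.ρc p q x := by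
  rw [coactionComponent, LinearMap.comp_apply, D.hρc _ x hx, map_sum, Finset.sum_eq_single p]
  · rw [TensorProduct.map_map, Nat.add_sub_cancel_left, homogeneousProj_comp_subtype_self,
      homogeneousProj_comp_subtype_self, TensorProduct.map_id, LinearMap.id_apply]
  · intro i _ hip
    rw [TensorProduct.map_map, homogeneousProj_comp_subtype_of_ne 𝒳 hip,
      TensorProduct.map_zero_left, LinearMap.zero_apply]
  · exact fun hp ↦ absurd (Finset.mem_range.mpr (by lia)) hp

theorem GradedComoduleData.injOn_coactionComponent [DirectSum.Decomposition 𝒞]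
    [DirectSum.Decomposition 𝒳] (D : GradedComoduleData k C 𝒞 X 𝒳) {p q : ℕ}
    (hinj : ∀ x ∈ 𝒳 (p + q), D.ρc p q x = 0 → x = 0) :
    Set.InjOn (coactionComponent 𝒞 𝒳 D.ρ p q) (𝒳 (p + q)) :=
  LinearMap.injOn_of_disjoint_ker subset_rfl <| LinearMap.disjoint_ker.mpr fun x hx hρx ↦
    hinj x hx (D.coactionComponent_eq hx ▸ hρx)

end GradedComodule

theorem statement12_general {R C X Y : Type*} [CommSemiring R]
    [AddCommMonoid C] [Module R C] (𝒞 : ℕ → Submodule R C) [DirectSum.Decomposition 𝒞]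
    [∀ q, Module.Flat R (𝒞 q)]
    [AddCommMonoid X] [Module R X] (𝒳 : ℕ → Submodule R X) [DirectSum.Decomposition 𝒳]
    [AddCommMonoid Y] [Module R Y] (𝒴 : ℕ → Submodule R Y) [DirectSum.Decomposition 𝒴]
    (ρX : X →ₗ[R] X ⊗[R] C) (ρY : Y →ₗ[R] Y ⊗[R] C) (f : X →ₗ[R] Y)
    (hfgr : ∀ i, ∀ x ∈ 𝒳 i, f x ∈ 𝒴 i) (hfcolin : ρY ∘ₗ f = f.rTensor C ∘ₗ ρX)
    (n : ℕ) (hXlow : ∀ i < n, 𝒳 i = ⊥)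
    (hXstrong : ∀ q, Set.InjOn (coactionComponent 𝒞 𝒳 ρX n q) (𝒳 (n + q)))
    (hfn : Set.InjOn f (𝒳 n)) : Function.Injective f := by
  refine injective_of_injOn_homogeneous hfgr fun i ↦ ?_
  obtain hi | hi := lt_or_ge i n
  · rw [hXlow i hi, Submodule.bot_coe]
    exact Set.injOn_singleton f 0
  · obtain ⟨q, rfl⟩ := Nat.exists_eq_add_of_le hi
    exact injOn_of_injOn_coactionComponent 𝒞 hfgr hfcolin hfn (hXstrong q)

/-- **Statement 12.** Let `C` be a connected strongly graded `k`-coalgebra, `X`, `Y` graded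
right `C`-comodules and `f : X → Y` a morphism of graded right `C`-comodules.  If `X` is
strongly graded in degree `n` and the component `fₙ : Xₙ → Yₙ` is injective, then `f` is
injective. -/
theorem statement12 [DirectSum.Decomposition 𝒞]
    (D : GradedCoalgebraData k C 𝒞) (hstrong : D.Strong)
    (X : Type) [AddCommGroup X] [Module k X] (𝒳 : ℕ → Submodule k X)
    [DirectSum.Decomposition 𝒳] (RX : GradedComoduleData k C 𝒞 X 𝒳)
    (Y : Type) [AddCommGroup Y] [Module k Y] (𝒴 : ℕ → Submodule k Y)
    [DirectSum.Decomposition 𝒴] (RY : GradedComoduleData k C 𝒞 Y 𝒴)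
    (f : X →ₗ[k] Y)
    (hfgr : ∀ i : ℕ, ∀ x ∈ 𝒳 i, f x ∈ 𝒴 i)
    (hfcolin : ∀ x : X, RY.ρ (f x) = (LinearMap.rTensor C f) (RX.ρ x))
    (n : ℕ)
    (hXlow : ∀ i : ℕ, i < n → 𝒳 i = ⊥)
    (hXstrong : ∀ q : ℕ, ∀ x ∈ 𝒳 (n + q), RX.ρc n q x = 0 → x = 0)
    (hfn : ∀ x ∈ 𝒳 n, f x = 0 → x = 0) :
    Function.Injective f := by
  exact statement12_general 𝒞 𝒳 𝒴 RX.ρ RY.ρ f hfgr (LinearMap.ext hfcolin) n hXlow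
    (fun q ↦ RX.injOn_coactionComponent (hXstrong q))
    (LinearMap.injOn_of_disjoint_ker subset_rfl (LinearMap.disjoint_ker.mpr hfn))

end Koszul
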